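/- arXiv:2301.03517 — 3 statements merged into one kernel-verified Lean document; each statement's English description precedes it below -/
import Mathlib

section
/- For every n ≥ 1, every random vector X = (X_1,…,X_n) of real random variables and every α ∈ (0,1), the diversification quotient based on VaR satisfies DQ^VaR_α(X) = (1 − F(Σ_{i=1}^n VaR_α(X_i)))/α, where F is the distribution function of the sum S = X_1 + ⋯ + X_n. -/
open MeasureTheory ProbabilityTheory Filter Set

namespace DQ

variable {Ω : Type*} [MeasurableSpace Ω]

/-- An atomless probability measure: every non-null measurable set has a measurable
subset of strictly smaller positive measure. -/
def Atomless (P : Measure Ω) : Prop :=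
  ∀ A : Set Ω, MeasurableSet A → 0 < P A →
    ∃ B, MeasurableSet B ∧ B ⊆ A ∧ 0 < P B ∧ P B < P A

/-- Value-at-Risk at level `α` (small-`α` convention):
`VaR_α(X) = inf {x | P(X ≤ x) ≥ 1 - α}`. -/
noncomputable def VaR (P : Measure Ω) (α : ℝ) (X : Ω → ℝ) : ℝ :=
  sInf {x : ℝ | 1 - α ≤ (P {ω | X ω ≤ x}).toReal}

/-- Expected Shortfall at level `α`: `ES_α(X) = (1/α) ∫_0^α VaR_β(X) dβ`. -/
noncomputable def ES (P : Measure Ω) (α : ℝ) (X : Ω → ℝ) : ℝ :=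
  (1 / α) * ∫ β in Set.Ioo (0 : ℝ) α, VaR P β X

/-- `α* = inf {β ∈ (0,1) | VaR_β(∑ Xᵢ) ≤ ∑ VaR_α(Xᵢ)}`, with `inf ∅ = 1`. -/
noncomputable def alphaStarVaR (P : Measure Ω) (α : ℝ) {n : ℕ} (X : Fin n → Ω → ℝ) : ℝ :=
  sInf ({β ∈ Set.Ioo (0 : ℝ) 1 |
    VaR P β (fun ω => ∑ i, X i ω) ≤ ∑ i, VaR P α (X i)} ∪ {1})

/-- Diversification quotient based on VaR: `DQ^VaR_α(X) = α*/α`. -/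
noncomputable def DQVaR (P : Measure Ω) (α : ℝ) {n : ℕ} (X : Fin n → Ω → ℝ) : ℝ :=
  alphaStarVaR P α X / α

/-- `α* = inf {β ∈ (0,1) | ES_β(∑ Xᵢ) ≤ ∑ ES_α(Xᵢ)}`, with `inf ∅ = 1`. -/
noncomputable def alphaStarES (P : Measure Ω) (α : ℝ) {n : ℕ} (X : Fin n → Ω → ℝ) : ℝ :=
  sInf ({β ∈ Set.Ioo (0 : ℝ) 1 |
    ES P β (fun ω => ∑ i, X i ω) ≤ ∑ i, ES P α (X i)} ∪ {1})

/-- Diversification quotient based on ES: `DQ^ES_α(X) = α*/α`. -/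
noncomputable def DQES (P : Measure Ω) (α : ℝ) {n : ℕ} (X : Fin n → Ω → ℝ) : ℝ :=
  alphaStarES P α X / α

end DQ

theorem DQ.var_le_iff {Ω : Type*} [MeasurableSpace Ω] (P : Measure Ω) [IsProbabilityMeasure P]
    (S : Ω → ℝ) (hS : Measurable S) (β : ℝ) (hβ : β ∈ Set.Ioo (0 : ℝ) 1) (t : ℝ) :
    DQ.VaR P β S ≤ t ↔ 1 - β ≤ (P {ω | S ω ≤ t}).toReal := by
  haveI : IsProbabilityMeasure (P.map S) := Measure.isProbabilityMeasure_map hS.aemeasurable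
  have key : ∀ x, (P {ω | S ω ≤ x}).toReal = cdf (P.map S) x := by
    intro x
    rw [cdf_eq_real, Measure.real, Measure.map_apply hS measurableSet_Iic]
    rfl
  unfold DQ.VaR
  simp only [key]
  set F := cdf (P.map S) with hF
  have hne : {x : ℝ | 1 - β ≤ F x}.Nonempty := by
    have := (tendsto_cdf_atTop (P.map S)).eventually (lt_mem_nhds (show 1 - β < 1 by linarith [hβ.1]))
    obtain ⟨x, hx⟩ := this.exists
    exact ⟨x, le_of_lt hx⟩
  have hbd : BddBelow {x : ℝ | 1 - β ≤ F x} := by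
    have := (tendsto_cdf_atBot (P.map S)).eventually (gt_mem_nhds (show 0 < 1 - β by linarith [hβ.2]))
    obtain ⟨x, hx⟩ := this.exists
    refine ⟨x, fun y hy => ?_⟩
    by_contra h
    have h2 := monotone_cdf (P.map S) (le_of_lt (not_le.mp h))
    have : 1 - β ≤ F y := hy
    linarith
  constructor
  · intro h
    have hr : Tendsto F (nhdsWithin t (Set.Ioi t)) (nhds (F t)) :=
      ((F.right_continuous t).mono Ioi_subset_Ici_self)
    refine ge_of_tendsto hr ?_
    filter_upwards [self_mem_nhdsWithin] with y hy
    obtain ⟨z, hz, hzy⟩ := exists_lt_of_csInf_lt hne (lt_of_le_of_lt h hy)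
    exact le_trans hz (monotone_cdf _ hzy.le)
  · intro h
    exact csInf_le hbd h

open DQ in
/-- For every n ≥ 1, every random vector X and every α ∈ (0,1),
DQ^VaR_α(X) = (1 − F(∑ᵢ VaR_α(Xᵢ)))/α, where F is the distribution function of
S = X₁ + ⋯ + Xₙ. -/
theorem stmt0 {Ω : Type*} [MeasurableSpace Ω] (P : Measure Ω) [IsProbabilityMeasure P]
    (hP : Atomless P) (n : ℕ) (hn : 1 ≤ n) (X : Fin n → Ω → ℝ)
    (hX : ∀ i, Measurable (X i)) (α : ℝ) (hα : α ∈ Set.Ioo (0 : ℝ) 1) :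
    DQVaR P α X =
      (1 - (P {ω | (∑ i, X i ω) ≤ ∑ i, VaR P α (X i)}).toReal) / α := by
  unfold DQVaR alphaStarVaR
  congr 1
  have hS : Measurable (fun ω => ∑ i, X i ω) := Finset.measurable_sum _ fun i _ => hX i
  set t := ∑ i, VaR P α (X i)
  have h0 : 0 ≤ (P {ω | (∑ i, X i ω) ≤ t}).toReal := ENNReal.toReal_nonneg
  have h1 : (P {ω | (∑ i, X i ω) ≤ t}).toReal ≤ 1 := measureReal_le_one
  have iff := fun β hβ => DQ.var_le_iff P (fun ω => ∑ i, X i ω) hS β hβ t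
  set p := (P {ω | (∑ i, X i ω) ≤ t}).toReal
  apply csInf_eq_of_forall_ge_of_forall_gt_exists_lt
  · exact ⟨1, Or.inr rfl⟩
  · rintro β (⟨hβ, h⟩ | h)
    · have := (iff β hβ).1 h
      linarith
    · rw [mem_singleton_iff.1 h]; linarith
  · intro w hw
    by_cases hw1 : 1 < w
    · exact ⟨1, Or.inr rfl, hw1⟩
    · have hm : (1 - p + w) / 2 ∈ Set.Ioo (0 : ℝ) 1 := ⟨by linarith, by linarith⟩
      exact ⟨(1 - p + w) / 2, Or.inl ⟨hm, (iff _ hm).2 (by linarith)⟩, by linarith⟩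
end

section
/- For every n ≥ 2 and α ∈ (0,1), the set of values {DQ^VaR_α(X) : X a random vector of n real random variables on the given atomless probability space} is exactly the closed interval [0, min{n, 1/α}]. -/
open MeasureTheory ProbabilityTheory Filter Set

namespace DQ

lemma exists_small {Ω : Type*} [MeasurableSpace Ω] (P : Measure Ω) [IsProbabilityMeasure P]
    (hP : Atomless P) (A : Set Ω) (hA : MeasurableSet A) (h0 : 0 < P.real A) (k : ℕ) :
    ∃ B, MeasurableSet B ∧ B ⊆ A ∧ 0 < P.real B ∧ P.real B ≤ P.real A * (1/2)^k := by
  induction k with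
  | zero => exact ⟨A, hA, subset_rfl, h0, by simp⟩
  | succ k ih =>
    obtain ⟨B, hB, hBA, hB0, hBk⟩ := ih
    obtain ⟨C, hC, hCB, hC0, hC1⟩ := hP B hB ((ENNReal.toReal_pos_iff.1 hB0).1)
    have c0 : 0 < P.real C := ENNReal.toReal_pos hC0.ne' (measure_ne_top _ _)
    have c1 : P.real C < P.real B :=
      (ENNReal.toReal_lt_toReal (measure_ne_top _ _) (measure_ne_top _ _)).2 hC1
    have hd : P.real (B \ C) = P.real B - P.real C := measureReal_sdiff hCB hC
    rw [pow_succ]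
    by_cases h : P.real C ≤ P.real B / 2
    · exact ⟨C, hC, hCB.trans hBA, c0, by linarith⟩
    · exact ⟨B \ C, hB.diff hC, diff_subset.trans hBA, by linarith, by linarith⟩

lemma exists_lt {Ω : Type*} [MeasurableSpace Ω] (P : Measure Ω) [IsProbabilityMeasure P]
    (hP : Atomless P) (A : Set Ω) (hA : MeasurableSet A) (h0 : 0 < P.real A) (e : ℝ) (he : 0 < e) :
    ∃ B, MeasurableSet B ∧ B ⊆ A ∧ 0 < P.real B ∧ P.real B < e := by
  obtain ⟨k, hk⟩ := exists_pow_lt_of_lt_one he (by norm_num : (1/2 : ℝ) < 1)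
  obtain ⟨B, h1, h2, h3, h4⟩ := exists_small P hP A hA h0 k
  refine ⟨B, h1, h2, h3, h4.trans_lt (lt_of_le_of_lt ?_ hk)⟩
  have : P.real A ≤ 1 := measureReal_le_one
  have : (0:ℝ) < (1/2)^k := by positivity
  nlinarith

lemma exists_superset {Ω : Type*} [MeasurableSpace Ω] (P : Measure Ω) [IsProbabilityMeasure P]
    (hP : Atomless P) (U : Set Ω) (hU : MeasurableSet U) (t : ℝ) (hUt : P.real U ≤ t)
    (ht : t ≤ 1) : ∃ V, MeasurableSet V ∧ U ⊆ V ∧ P.real V = t := by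
  let T := {B : Set Ω // MeasurableSet B ∧ P.real B ≤ t}
  have step : ∀ B : T, ∃ C : T, B.1 ⊆ C.1 ∧
      ∀ D : T, B.1 ⊆ D.1 → P.real D.1 - P.real B.1 ≤ 2 * (P.real C.1 - P.real B.1) := by
    intro B
    let S : Set ℝ := {x | ∃ D : T, B.1 ⊆ D.1 ∧ P.real D.1 = x}
    have hne : S.Nonempty := ⟨_, B, subset_rfl, rfl⟩
    have hbd : BddAbove S := ⟨t, by rintro x ⟨D, -, rfl⟩; exact D.2.2⟩
    have hle : ∀ D : T, B.1 ⊆ D.1 → P.real D.1 ≤ sSup S := fun D hD => le_csSup hbd ⟨D, hD, rfl⟩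
    rcases (hle B subset_rfl).eq_or_lt with h | h
    · refine ⟨B, subset_rfl, fun D hD => ?_⟩
      have := hle D hD
      linarith
    · obtain ⟨x, ⟨C, hC, rfl⟩, hx⟩ :=
        exists_lt_of_lt_csSup hne (show (sSup S + P.real B.1) / 2 < sSup S by linarith)
      refine ⟨C, hC, fun D hD => ?_⟩
      have := hle D hD
      linarith
  choose g hg1 hg2 using step
  let f : ℕ → T := fun k => g^[k] ⟨U, hU, hUt⟩
  have hf : ∀ k, f (k+1) = g (f k) := fun k => Function.iterate_succ_apply' _ _ _
  have hmono : Monotone (fun k => (f k).1) := by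
    apply monotone_nat_of_le_succ
    intro k
    show (f k).1 ⊆ (f (k+1)).1
    rw [hf]; exact hg1 _
  let V := ⋃ k, (f k).1
  have hV : MeasurableSet V := MeasurableSet.iUnion fun k => (f k).2.1
  have hlim : Tendsto (fun k => P.real (f k).1) atTop (nhds (P.real V)) :=
    (ENNReal.tendsto_toReal (measure_ne_top _ _)).comp (tendsto_measure_iUnion_atTop hmono)
  have hVt : P.real V ≤ t := le_of_tendsto' hlim fun k => (f k).2.2
  refine ⟨V, hV, subset_iUnion (fun k => (f k).1) 0, ?_⟩
  by_contra hne
  have hlt : P.real V < t := lt_of_le_of_ne hVt hne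
  have hc : P.real Vᶜ = 1 - P.real V := probReal_compl_eq_one_sub hV
  obtain ⟨D, hD, hDV, hD0, hD1⟩ := exists_lt P hP Vᶜ hV.compl (by linarith) (t - P.real V)
    (by linarith)
  have hu : P.real (V ∪ D) = P.real V + P.real D :=
    measureReal_union (disjoint_left.2 fun x hx hx' => hDV hx' hx) hD
  have key : ∀ k, P.real V + P.real D - P.real (f k).1
      ≤ 2 * (P.real (f (k+1)).1 - P.real (f k).1) := by
    intro k
    have := hg2 (f k) ⟨V ∪ D, hV.union hD, by linarith⟩
      ((subset_iUnion (fun k => (f k).1) k).trans subset_union_left)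
    rw [hf, ← hu]; exact this
  have := le_of_tendsto_of_tendsto' (tendsto_const_nhds.sub hlim)
    (((hlim.comp (tendsto_add_atTop_nat 1)).sub hlim).const_mul 2) key
  linarith

lemma exists_family {Ω : Type*} [MeasurableSpace Ω] (P : Measure Ω) [IsProbabilityMeasure P]
    (hP : Atomless P) (α : ℝ) (hα : 0 ≤ α) (n : ℕ) : ∀ t : ℝ, 0 ≤ t → t ≤ 1 → t ≤ n * α →
    ∃ A : Fin n → Set Ω, (∀ i, MeasurableSet (A i)) ∧ (∀ i, P.real (A i) ≤ α) ∧
      P.real (⋃ i, A i) = t := by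
  induction n with
  | zero =>
    intro t h0 h1 h2
    refine ⟨fun _ => ∅, fun i => i.elim0, fun i => i.elim0, ?_⟩
    simp at h2 ⊢
    linarith
  | succ n ih =>
    intro t h0 h1 h2
    push_cast at h2
    obtain ⟨A, hA, hAα, hAt⟩ := ih (min t (n * α)) (le_min h0 (by positivity))
      ((min_le_left _ _).trans h1) (min_le_right _ _)
    have hm : MeasurableSet (⋃ i, A i) := MeasurableSet.iUnion hA
    obtain ⟨V, hV, hUV, hVt⟩ := exists_superset P hP _ hm t
      (by rw [hAt]; exact min_le_left _ _) h1
    refine ⟨Fin.cons (V \ ⋃ i, A i) A, ?_, ?_, ?_⟩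
    · intro i
      refine Fin.cases ?_ (fun j => ?_) i
      · simpa using hV.diff hm
      · simpa using hA j
    · intro i
      refine Fin.cases ?_ (fun j => ?_) i
      · have : P.real (V \ ⋃ i, A i) = P.real V - P.real (⋃ i, A i) := measureReal_sdiff hUV hm
        simp only [Fin.cons_zero]
        rw [this, hVt, hAt]
        rcases min_cases t (n * α) with h | h <;> rw [h.1] <;> linarith
      · simpa using hAα j
    · rw [← hVt]
      congr 1
      ext x
      simp only [mem_iUnion, Fin.exists_fin_succ, Fin.cons_zero, Fin.cons_succ, mem_diff]
      constructor
      · rintro (h | h)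
        · exact h.1
        · exact hUV (mem_iUnion.2 h)
      · intro h
        by_cases h' : ∃ i, x ∈ A i
        · exact Or.inr h'
        · exact Or.inl ⟨h, h'⟩

/-- VaR at level in (0,1) is characterised by the distribution function. -/
lemma VaR_le_iff {Ω : Type*} [MeasurableSpace Ω] (P : Measure Ω) [IsProbabilityMeasure P]
    (X : Ω → ℝ) (hX : Measurable X) (β : ℝ) (hβ : β ∈ Set.Ioo (0 : ℝ) 1) (v : ℝ) :
    VaR P β X ≤ v ↔ 1 - β ≤ P.real {ω | X ω ≤ v} := by
  have : IsProbabilityMeasure (P.map X) := Measure.isProbabilityMeasure_map hX.aemeasurable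
  have hc : ∀ x, (P {ω | X ω ≤ x}).toReal = cdf (P.map X) x := by
    intro x
    rw [cdf_eq_real, measureReal_def, Measure.map_apply hX measurableSet_Iic]
    rfl
  unfold VaR
  rw [measureReal_def]
  simp only [hc]
  set F := cdf (P.map X)
  have hbdd : BddBelow {x | 1 - β ≤ F x} := by
    obtain ⟨b, hb⟩ := ((tendsto_cdf_atBot (P.map X)).eventually
      (gt_mem_nhds (show 0 < 1 - β by linarith [hβ.2]))).exists
    refine ⟨b, fun x hx => ?_⟩
    by_contra hlt
    have : F x ≤ F b := F.mono (not_le.1 hlt).le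
    have : 1 - β ≤ F x := hx
    have : F b < 1 - β := hb
    linarith
  have hne : {x | 1 - β ≤ F x}.Nonempty := by
    obtain ⟨b, hb⟩ := ((tendsto_cdf_atTop (P.map X)).eventually
      (lt_mem_nhds (show 1 - β < 1 by linarith [hβ.1]))).exists
    exact ⟨b, hb.le⟩
  constructor
  · intro h
    have hgt : ∀ y, v < y → 1 - β ≤ F y := by
      intro y hy
      obtain ⟨x, hx, hxy⟩ := exists_lt_of_csInf_lt hne (h.trans_lt hy)
      exact le_trans hx (F.mono hxy.le)
    have hr : Tendsto F (nhdsWithin v (Ioi v)) (nhds (F v)) :=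
      (F.right_continuous v).mono_left (nhdsWithin_mono _ Ioi_subset_Ici_self)
    exact ge_of_tendsto hr (eventually_nhdsWithin_of_forall hgt)
  · intro h
    exact csInf_le hbdd h

lemma alphaStar_eq {Ω : Type*} [MeasurableSpace Ω] (P : Measure Ω) [IsProbabilityMeasure P]
    (α : ℝ) {n : ℕ} (X : Fin n → Ω → ℝ) (hX : ∀ i, Measurable (X i)) :
    alphaStarVaR P α X = P.real {ω | ∑ i, VaR P α (X i) < ∑ i, X i ω} := by
  have hS : Measurable (fun ω => ∑ i, X i ω) := Finset.measurable_fun_sum _ fun i _ => hX i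
  set v := ∑ i, VaR P α (X i)
  have hcompl : P.real {ω | v < ∑ i, X i ω} = 1 - P.real {ω | ∑ i, X i ω ≤ v} := by
    rw [← probReal_compl_eq_one_sub (measurableSet_le hS measurable_const)]
    congr 1
    ext ω; simp
  set t := P.real {ω | v < ∑ i, X i ω}
  have ht0 : 0 ≤ t := measureReal_nonneg
  have ht1 : t ≤ 1 := measureReal_le_one
  have hset : ({β ∈ Set.Ioo (0 : ℝ) 1 | VaR P β (fun ω => ∑ i, X i ω) ≤ v} ∪ {1})
      = {β | 0 < β ∧ t ≤ β ∧ β ≤ 1} := by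
    ext β
    simp only [mem_union, mem_setOf_eq, mem_singleton_iff]
    constructor
    · rintro (⟨h, h'⟩ | rfl)
      · rw [VaR_le_iff P _ hS β h] at h'
        exact ⟨h.1, by linarith, h.2.le⟩
      · exact ⟨one_pos, ht1, le_rfl⟩
    · rintro ⟨h1, h2, h3⟩
      rcases h3.eq_or_lt with h | h
      · exact Or.inr h
      · refine Or.inl ⟨⟨h1, h⟩, ?_⟩
        rw [VaR_le_iff P _ hS β ⟨h1, h⟩]
        linarith
  unfold alphaStarVaR
  rw [hset]
  have hne : {β : ℝ | 0 < β ∧ t ≤ β ∧ β ≤ 1}.Nonempty := ⟨1, one_pos, ht1, le_rfl⟩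
  refine IsGLB.csInf_eq ?_ hne
  refine ⟨fun β h => h.2.1, fun b hb => ?_⟩
  by_contra hlt
  have hlt := not_le.1 hlt
  have h1 : b ≤ 1 := hb ⟨one_pos, ht1, le_rfl⟩
  have := hb (show (t + b) / 2 ∈ {β | 0 < β ∧ t ≤ β ∧ β ≤ 1} from
    ⟨by linarith, by linarith, by linarith⟩)
  linarith

end DQ

open DQ in
/-- For every n ≥ 2 and α ∈ (0,1), the set of values attained by DQ^VaR_α over all
random vectors of n real random variables is exactly [0, min{n, 1/α}]. -/
theorem stmt1 {Ω : Type*} [MeasurableSpace Ω] (P : Measure Ω) [IsProbabilityMeasure P]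
    (hP : Atomless P) (n : ℕ) (hn : 2 ≤ n) (α : ℝ) (hα : α ∈ Set.Ioo (0 : ℝ) 1) :
    {d : ℝ | ∃ X : Fin n → Ω → ℝ, (∀ i, Measurable (X i)) ∧ DQVaR P α X = d}
      = Set.Icc 0 (min (n : ℝ) (1 / α)) := by
  have hα0 := hα.1
  ext d
  simp only [mem_setOf_eq]
  constructor
  · rintro ⟨X, hX, rfl⟩
    unfold DQVaR
    rw [alphaStar_eq P α X hX]
    refine ⟨div_nonneg measureReal_nonneg hα0.le, le_min ?_ ?_⟩
    · rw [div_le_iff₀ hα0]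
      have hi : ∀ i, P.real {ω | VaR P α (X i) < X i ω} ≤ α := by
        intro i
        have h := (VaR_le_iff P (X i) (hX i) α hα _).1 le_rfl
        have h' := probReal_compl_eq_one_sub (μ := P)
          (measurableSet_le (hX i) (measurable_const (a := VaR P α (X i))))
        have : {ω | VaR P α (X i) < X i ω} = {ω | X i ω ≤ VaR P α (X i)}ᶜ := by
          ext ω; simp
        rw [this, h']
        linarith
      calc P.real {ω | ∑ i, VaR P α (X i) < ∑ i, X i ω}
          ≤ P.real (⋃ i, {ω | VaR P α (X i) < X i ω}) := by
            apply measureReal_mono _ (measure_ne_top _ _)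
            intro ω hω
            have hω' : ∑ i, VaR P α (X i) < ∑ i, X i ω := hω
            obtain ⟨i, -, h⟩ := Finset.exists_lt_of_sum_lt hω'
            exact mem_iUnion.2 ⟨i, h⟩
        _ ≤ ∑ i, P.real {ω | VaR P α (X i) < X i ω} := measureReal_iUnion_fintype_le _
        _ ≤ ∑ _i : Fin n, α := Finset.sum_le_sum fun i _ => hi i
        _ = n * α := by simp
    · exact div_le_div_of_nonneg_right measureReal_le_one hα0.le
  · rintro ⟨hd0, hd⟩
    have hdn := hd.trans (min_le_left _ _)
    have hd1 := hd.trans (min_le_right _ _)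
    rw [le_div_iff₀ hα0] at hd1
    obtain ⟨A, hA, hAα, hAt⟩ := exists_family P hP α hα0.le n (d * α) (by positivity) hd1
      (by gcongr)
    have hX : ∀ i, Measurable ((A i).indicator (fun _ => (1:ℝ))) :=
      fun i => measurable_const.indicator (hA i)
    refine ⟨fun i => (A i).indicator (fun _ => (1:ℝ)), hX, ?_⟩
    have hv : ∀ i, VaR P α ((A i).indicator (fun _ => (1:ℝ))) = 0 := by
      intro i
      apply le_antisymm
      · rw [VaR_le_iff P _ (hX i) α hα]
        have : {ω | (A i).indicator (fun _ => (1:ℝ)) ω ≤ 0} = (A i)ᶜ := by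
          ext ω
          by_cases h : ω ∈ A i <;> simp [h]
        rw [this, probReal_compl_eq_one_sub (hA i)]
        linarith [hAα i]
      · by_contra hlt
        have h := (VaR_le_iff P _ (hX i) α hα _).1 le_rfl
        have he : {ω | (A i).indicator (fun _ => (1:ℝ)) ω
            ≤ VaR P α ((A i).indicator (fun _ => (1:ℝ)))} = ∅ := by
          ext ω
          simp only [mem_setOf_eq, mem_empty_iff_false, iff_false, not_le]
          exact (not_le.1 hlt).trans_le (indicator_nonneg (fun _ _ => zero_le_one) ω)
        rw [he, measureReal_empty] at h
        linarith [hα.2]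
    unfold DQVaR
    rw [alphaStar_eq P α _ hX]
    simp only [hv, Finset.sum_const_zero]
    have : {ω | 0 < ∑ i, (A i).indicator (fun _ => (1:ℝ)) ω} = ⋃ i, A i := by
      ext ω
      have hnn : ∀ i ∈ Finset.univ, 0 ≤ (A i).indicator (fun _ => (1:ℝ)) ω :=
        fun i _ => indicator_nonneg (fun _ _ => zero_le_one) ω
      rw [mem_setOf_eq, Finset.sum_pos_iff_of_nonneg hnn, mem_iUnion]
      refine exists_congr fun i => ?_
      by_cases h : ω ∈ A i <;> simp [h]
    rw [this, hAt]
    field_simp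
end

section
/- Let n ≥ 2, α ∈ (0, 1/n), and let X = (X_1,…,X_n) follow an α-concentration-exclusion (α-CE) model. Then DQ^VaR_α(X) = n. -/
open MeasureTheory ProbabilityTheory Filter Set

namespace DQ

variable {Ω : Type*} [MeasurableSpace Ω]

/-- `A` is a tail event of `X`: `0 < P(A) < 1` and, off a null set,
`X(ω) ≥ X(ω')` for all `ω ∈ A` and `ω' ∈ Aᶜ`. -/
def TailEvent (P : Measure Ω) (X : Ω → ℝ) (A : Set Ω) : Prop :=
  MeasurableSet A ∧ 0 < P A ∧ P A < 1 ∧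
  ∃ N : Set Ω, P N = 0 ∧ ∀ ω ∈ A \ N, ∀ ω' ∈ Aᶜ \ N, X ω' ≤ X ω

/-- `(X₁,…,Xₙ)` is `α`-concentrated: the components share a common tail event of
probability `α`. -/
def Concentrated (P : Measure Ω) {n : ℕ} (X : Fin n → Ω → ℝ) (α : ℝ) : Prop :=
  ∃ A : Set Ω, P A = ENNReal.ofReal α ∧ ∀ i, TailEvent P (X i) A

end DQ

namespace DQ

variable {Ω : Type*} [MeasurableSpace Ω]

/-- The `α`-concentration-exclusion (`α`-CE) model, for `α ∈ (0, 1/n)`. -/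
def CEModel (P : Measure Ω) {n : ℕ} (X : Fin n → Ω → ℝ) (α : ℝ) : Prop :=
  (∀ i, (P {ω | VaR P α (X i) < X i ω}).toReal = α) ∧
  (∀ i, (n : ℝ) * α ≤ (P {ω | VaR P α (X i) ≤ X i ω}).toReal) ∧
  (∀ i j, i ≠ j →
    P ({ω | VaR P α (X i) < X i ω} ∩ {ω | VaR P α (X j) < X j ω}) = 0) ∧
  Concentrated P X ((n : ℝ) * α)

end DQ

open DQ in
theorem VaR_le_iff_aux {Ω : Type*} [MeasurableSpace Ω] (P : Measure Ω) [IsProbabilityMeasure P]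
    (S : Ω → ℝ) (hS : Measurable S) (β s : ℝ) (h0 : 0 < β) (h1 : β < 1) :
    VaR P β S ≤ s ↔ 1 - β ≤ (P {ω | S ω ≤ s}).toReal := by
  have hprob : IsProbabilityMeasure (P.map S) := Measure.isProbabilityMeasure_map hS.aemeasurable
  have hc : ∀ x, (P {ω | S ω ≤ x}).toReal = cdf (P.map S) x := by
    intro x
    rw [cdf_eq_real, Measure.real, Measure.map_apply hS measurableSet_Iic]
    rfl
  unfold VaR
  simp only [hc]
  have hne : {x : ℝ | 1 - β ≤ cdf (P.map S) x}.Nonempty := by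
    have := (tendsto_cdf_atTop (P.map S)).eventually (lt_mem_nhds (show 1 - β < 1 by linarith))
    obtain ⟨x, hx⟩ := this.exists
    exact ⟨x, hx.le⟩
  have hbd : BddBelow {x : ℝ | 1 - β ≤ cdf (P.map S) x} := by
    have := (tendsto_cdf_atBot (P.map S)).eventually (gt_mem_nhds (show 0 < 1 - β by linarith))
    obtain ⟨x, hx⟩ := this.exists
    refine ⟨x, fun y hy => ?_⟩
    by_contra hlt
    have := monotone_cdf (P.map S) (not_le.1 hlt).le
    simp only [mem_ofPred_eq] at hy
    linarith
  constructor
  · intro h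
    have hr : Tendsto (cdf (P.map S)) (nhdsWithin s (Ioi s)) (nhds (cdf (P.map S) s)) :=
      ((cdf (P.map S)).right_continuous s).mono_left (nhdsWithin_mono _ Ioi_subset_Ici_self)
    refine ge_of_tendsto hr ?_
    filter_upwards [self_mem_nhdsWithin] with x hx
    obtain ⟨y, hy, hyx⟩ := exists_lt_of_csInf_lt hne (lt_of_le_of_lt h hx)
    exact le_trans hy (monotone_cdf _ hyx.le)
  · intro h
    exact csInf_le hbd h

open DQ in
theorem tail_aux {Ω : Type*} [MeasurableSpace Ω] (P : Measure Ω) [IsProbabilityMeasure P]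
    (X : Ω → ℝ) (hX : Measurable X) (A : Set Ω) (hA : TailEvent P X A) (v : ℝ)
    (h1 : P A ≤ P {ω | v ≤ X ω}) (h2 : P {ω | v < X ω} < P A) :
    (∀ᵐ ω ∂P, ω ∈ A → v ≤ X ω) ∧ (∀ᵐ ω ∂P, v < X ω → ω ∈ A) := by
  obtain ⟨hm, -, -, N, hN, hT⟩ := hA
  have hNae : ∀ᵐ ω ∂P, ω ∉ N := measure_eq_zero_iff_ae_notMem.1 hN
  constructor
  · by_contra hcon
    have hex : ∃ᵐ ω ∂P, ω ∈ A ∧ X ω < v := by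
      intro hh
      apply hcon
      filter_upwards [hh] with ω h hωA
      by_contra hlt
      exact h ⟨hωA, not_le.1 hlt⟩
    obtain ⟨ω₀, ⟨hA0, hv0⟩, hN0⟩ := (hex.and_eventually hNae).exists
    have hBm : MeasurableSet (A ∩ {ω | X ω < v}) := hm.inter (measurableSet_lt hX measurable_const)
    have hB : P (A ∩ {ω | X ω < v}) ≠ 0 := by
      intro hz
      exact hex (measure_eq_zero_iff_ae_notMem.1 hz)
    have hsub : P {ω | v ≤ X ω} ≤ P (A \ (A ∩ {ω | X ω < v})) := by
      apply measure_mono_ae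
      filter_upwards [hNae] with ω hω hv
      have hv' : v ≤ X ω := hv
      have hωA : ω ∈ A := by
        by_contra hna
        have := hT ω₀ ⟨hA0, hN0⟩ ω ⟨hna, hω⟩
        linarith
      exact ⟨hωA, fun hh => absurd hh.2 (not_lt.2 hv')⟩
    rw [measure_sdiff inter_subset_left hBm.nullMeasurableSet (measure_ne_top _ _)] at hsub
    have hlt : P A - P (A ∩ {ω | X ω < v}) < P A := by
      apply ENNReal.sub_lt_self (measure_ne_top _ _) _ hB
      intro hz
      exact hB (measure_mono_null inter_subset_left hz)
    exact absurd (h1.trans hsub) (not_le.2 hlt)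
  · by_contra hcon
    have hex : ∃ᵐ ω ∂P, v < X ω ∧ ω ∉ A := by
      intro hh
      apply hcon
      filter_upwards [hh] with ω h hv
      by_contra hna
      exact h ⟨hv, hna⟩
    obtain ⟨ω₀, ⟨hv0, hA0⟩, hN0⟩ := (hex.and_eventually hNae).exists
    refine absurd h2 (not_lt.2 (measure_mono_ae ?_))
    filter_upwards [hNae] with ω hω hωA
    exact lt_of_lt_of_le hv0 (hT ω ⟨hωA, hω⟩ ω₀ ⟨hA0, hN0⟩)

open DQ in
/-- If n ≥ 2, α ∈ (0, 1/n), and X follows an α-CE model, then DQ^VaR_α(X) = n. -/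
theorem stmt8 {Ω : Type*} [MeasurableSpace Ω] (P : Measure Ω) [IsProbabilityMeasure P]
    (hP : Atomless P) (n : ℕ) (hn : 2 ≤ n) (X : Fin n → Ω → ℝ)
    (hX : ∀ i, Measurable (X i)) (α : ℝ) (hα : α ∈ Set.Ioo (0 : ℝ) (1 / n))
    (hCE : CEModel P X α) :
    DQVaR P α X = n := by
  obtain ⟨hα0, hα1⟩ := hα
  obtain ⟨c1, c2, c3, A, hPA, hA⟩ := hCE
  have hn2 : (2 : ℝ) ≤ n := by exact_mod_cast hn
  have hnα1 : n * α < 1 := by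
    rw [lt_div_iff₀ (by linarith)] at hα1
    linarith
  have hnα0 : 0 < n * α := by positivity
  have hααn : α < n * α := by nlinarith
  have hE : ∀ i, P {ω | VaR P α (X i) < X i ω} = ENNReal.ofReal α := fun i => by
    exact (ENNReal.ofReal_toReal (measure_ne_top _ _)).symm.trans (congrArg _ (c1 i))
  have key := fun i => tail_aux P (X i) (hX i) A (hA i) (VaR P α (X i))
    (by rw [hPA]; exact ENNReal.ofReal_le_of_le_toReal (c2 i))
    (by rw [hPA, hE]; exact (ENNReal.ofReal_lt_ofReal_iff hnα0).2 hααn)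
  have hk1 : ∀ᵐ ω ∂P, ∀ i, ω ∈ A → VaR P α (X i) ≤ X i ω := ae_all_iff.2 fun i => (key i).1
  have hk2 : ∀ᵐ ω ∂P, ∀ i, VaR P α (X i) < X i ω → ω ∈ A := ae_all_iff.2 fun i => (key i).2
  have hEm : ∀ i, MeasurableSet {ω | VaR P α (X i) < X i ω} :=
    fun i => measurableSet_lt measurable_const (hX i)
  have hU : P (⋃ i, {ω | VaR P α (X i) < X i ω}) = P A := by
    rw [measure_iUnion₀ (fun i j hij => c3 i j hij) (fun i => (hEm i).nullMeasurableSet),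
      tsum_fintype, hPA]
    simp only [hE]
    rw [Finset.sum_const, Finset.card_univ, Fintype.card_fin, nsmul_eq_mul,
      ENNReal.ofReal_mul (by positivity), ENNReal.ofReal_natCast]
  have hUA : (⋃ i, {ω | VaR P α (X i) < X i ω} : Set Ω) =ᵐ[P] A := by
    apply ae_eq_of_ae_subset_of_measure_ge _ hU.ge
      (MeasurableSet.iUnion hEm).nullMeasurableSet (measure_ne_top _ _)
    filter_upwards [hk2] with ω h hω
    obtain ⟨i, hi⟩ := mem_iUnion.1 hω
    exact h i hi
  have hAc : {ω | ∑ i, X i ω ≤ ∑ i, VaR P α (X i)} =ᵐ[P] Aᶜ := by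
    refine eventuallyEq_set.2 ?_
    filter_upwards [hk1, hk2, eventuallyEq_set.1 hUA] with ω h1 h2 h3
    constructor
    · intro h hωA
      obtain ⟨i, hi⟩ := mem_iUnion.1 (h3.2 hωA)
      have : ∑ i, VaR P α (X i) < ∑ i, X i ω :=
        Finset.sum_lt_sum (fun j _ => h1 j hωA) ⟨i, Finset.mem_univ i, hi⟩
      exact absurd h (not_le.2 this)
    · intro hna
      exact Finset.sum_le_sum fun i _ => not_lt.1 fun hlt => hna (h2 i hlt)
  have hAm : MeasurableSet A := (hA ⟨0, by omega⟩).1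
  have hPS : (P {ω | ∑ i, X i ω ≤ ∑ i, VaR P α (X i)}).toReal = 1 - n * α := by
    rw [measure_congr hAc]
    change P.real Aᶜ = _
    rw [probReal_compl_eq_one_sub hAm, Measure.real, hPA, ENNReal.toReal_ofReal hnα0.le]
  have hSm : Measurable fun ω => ∑ i, X i ω := Finset.measurable_sum _ fun i _ => hX i
  have hstar : alphaStarVaR P α X = n * α := by
    unfold alphaStarVaR
    apply IsLeast.csInf_eq
    constructor
    · left
      exact ⟨⟨hnα0, hnα1⟩, (VaR_le_iff_aux P _ hSm _ _ hnα0 hnα1).2 hPS.ge⟩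
    · rintro β (⟨⟨hb0, hb1⟩, hb⟩ | hb)
      · have := (VaR_le_iff_aux P _ hSm _ _ hb0 hb1).1 hb
        rw [hPS] at this
        linarith
      · rw [mem_singleton_iff.1 hb]; exact hnα1.le
  unfold DQVaR
  rw [hstar, mul_div_assoc, div_self hα0.ne', mul_one]
end
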